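/- Let Φ be of type B_n, C_n, or D_n, let I ⊆ Δ be standard, and let λ be an integral Φ_I-regular weight with Φ_{λ̄} = Φ_J. Let 1 ≤ i, j ≤ q_{m−1} with a := |λ_i|, b := |λ_j| and ab ≠ 0, and let 1 ≤ s, t < m be such that q_{s−1} < i ≤ q_s and q_{t−1} < j ≤ q_t. If (1) n_s^λ(a) = n_t^λ(b) = 1, (2) n_s^λ(b) ≤ 1 or n_t^λ(a) ≥ 1, and (3) n_s^λ(b) ≥ 1 or n_t^λ(a) ≤ 1, then λ ⟷ s_{e_i}s_{e_j}λ. -/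

import Mathlib

namespace JantzenBlocks

open scoped Classical

/-- The three classical types `B`, `C`, `D`. -/
inductive CType : Type
  | B | C | D
deriving DecidableEq

/-- The weight space `ℝ^n`. -/
abbrev V (n : ℕ) := Fin n → ℝ

noncomputable section

/-- The standard inner product on `ℝ^n`. -/
def inn {n : ℕ} (x y : V n) : ℝ := ∑ i, x i * y i

/-- The standard basis vector `e i`. -/
def ee {n : ℕ} (i : Fin n) : V n := Pi.single i 1

/-- The reflection `s_v` in the vector `v`. -/
def sRefl {n : ℕ} (v x : V n) : V n := x - (2 * inn x v / inn v v) • v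

/-- The roots `±e_i ± e_j` (`i ≠ j`), i.e. the root system of type `D_n`. -/
def DRoots (n : ℕ) : Set (V n) :=
  {v | ∃ i j : Fin n, i ≠ j ∧ (v = ee i + ee j ∨ v = ee i - ee j ∨ v = -ee i - ee j)}

/-- The ambient root system `Φ` of type `B_n`, `C_n` or `D_n`. -/
def Phi (n : ℕ) : CType → Set (V n)
  | CType.B => DRoots n ∪ {v | ∃ i : Fin n, v = ee i ∨ v = -ee i}
  | CType.C => DRoots n ∪ {v | ∃ i : Fin n, v = (2:ℝ) • ee i ∨ v = -((2:ℝ) • ee i)}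
  | CType.D => DRoots n

/-- The standard positive system `Φ⁺`: roots whose first nonzero coordinate is positive. -/
def PhiPos (n : ℕ) (ct : CType) : Set (V n) :=
  {v | v ∈ Phi n ct ∧ ∃ i : Fin n, 0 < v i ∧ ∀ j : Fin n, j < i → v j = 0}

/-- The simple root `α_{i+1}` (`0`-based index `i`). -/
def alphaR (n : ℕ) (ct : CType) (i : Fin n) : V n :=
  if h : i.1 + 1 < n then ee i - ee ⟨i.1 + 1, h⟩
  else
    match ct with
    | CType.B => ee i
    | CType.C => (2:ℝ) • ee i
    | CType.D => ee ⟨n - 2, Nat.sub_lt i.pos (by norm_num)⟩ + ee i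

/-- The subsystem `Φ_I` generated by the simple roots indexed by `I`. -/
def PhiI (n : ℕ) (ct : CType) (I : Finset (Fin n)) : Set (V n) :=
  Phi n ct ∩ (Submodule.span ℝ (alphaR n ct '' (I : Set (Fin n))) : Set (V n))

/-- `λ` is `Φ_I`-regular. -/
def RegI (n : ℕ) (ct : CType) (I : Finset (Fin n)) (lam : V n) : Prop :=
  ∀ β ∈ PhiI n ct I, inn lam β ≠ 0

/-- `λ` is integral. -/
def IntegralW (n : ℕ) (ct : CType) (lam : V n) : Prop :=
  ∀ β ∈ Phi n ct, ∃ k : ℤ, 2 * inn lam β / inn β β = (k : ℝ)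

/-- `λ` is dominant. -/
def DominantW (n : ℕ) (ct : CType) (lam : V n) : Prop :=
  ∀ i : Fin n, 0 ≤ inn lam (alphaR n ct i)

/-- `μ` lies in the `W_I`-orbit of `λ` (`W_I` generated by the reflections `s_α`, `α ∈ I`). -/
def WIOrb (n : ℕ) (ct : CType) (I : Finset (Fin n)) : V n → V n → Prop :=
  Relation.ReflTransGen (fun x y => ∃ i ∈ I, y = sRefl (alphaR n ct i) x)

/-- `μ` lies in the `W`-orbit of `λ`. -/
def WOrb (n : ℕ) (ct : CType) : V n → V n → Prop := WIOrb n ct Finset.univ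

/-- `λ ∈ Λ_I⁺`. -/
def LamIPlus (n : ℕ) (ct : CType) (I : Finset (Fin n)) (lam : V n) : Prop :=
  IntegralW n ct lam ∧ ∀ i ∈ I, 0 < inn lam (alphaR n ct i)

/-- The sorted list `q_1 < q_2 < … < q_{m-1}` (`1`-based values) of indices of `Δ∖I`. -/
def Qlist (n : ℕ) (I : Finset (Fin n)) : List ℕ :=
  ((Finset.univ \ I).sort (· ≤ ·)).map (fun j => j.1 + 1)

/-- The number `m` of segments determined by `I`. -/
def mval (n : ℕ) (I : Finset (Fin n)) : ℕ := (Qlist n I).length + 1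

/-- `q_s`, with the conventions `q_0 = 0` and `q_m = n`. -/
def qval (n : ℕ) (I : Finset (Fin n)) (s : ℕ) : ℕ :=
  if s = 0 then 0 else if s < mval n I then (Qlist n I).getD (s - 1) 0 else n

/-- `I` is standard (automatic in types `B`, `C`). -/
def StandardI (n : ℕ) (ct : CType) (I : Finset (Fin n)) : Prop :=
  ct = CType.D → ∀ h : 2 ≤ n,
    ((⟨n - 2, by omega⟩ : Fin n) ∈ I ∨ (⟨n - 1, by omega⟩ : Fin n) ∉ I)

/-- `q_s`, corrected for nonstandard `I` (where `q_{m-1}` is replaced by `n`,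
so that the `(m-1)`-st segment is `(q_{m-2}, n]` and the `m`-th segment is empty). -/
def qv (n : ℕ) (ct : CType) (I : Finset (Fin n)) (s : ℕ) : ℕ :=
  if ¬ StandardI n ct I ∧ s = mval n I - 1 then n else qval n I s

/-- The segment length `n_s`. -/
def nsval (n : ℕ) (ct : CType) (I : Finset (Fin n)) (s : ℕ) : ℕ :=
  qv n ct I s - qv n ct I (s - 1)

/-- The (`0`-based) index `i` lies in the `s`-th segment, i.e. `q_{s-1} < i+1 ≤ q_s`. -/
def InSeg (n : ℕ) (ct : CType) (I : Finset (Fin n)) (s : ℕ) (i : Fin n) : Prop :=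
  qv n ct I (s - 1) < i.1 + 1 ∧ i.1 + 1 ≤ qv n ct I s

/-- `n_s^λ(a)`: the number of entries of the `s`-th segment of `λ` with absolute value `a`. -/
def nsl (n : ℕ) (ct : CType) (I : Finset (Fin n)) (lam : V n) (s : ℕ) (a : ℝ) : ℕ :=
  (Finset.univ.filter (fun i : Fin n => InSeg n ct I s i ∧ |lam i| = a)).card

/-- `a_t = λ̄_{q̄_t}` for `1 ≤ t < m̄`, and `a_{m̄} = 0`. -/
def aval (n : ℕ) (ct : CType) (J : Finset (Fin n)) (lbar : V n) (t : ℕ) : ℝ :=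
  if t < mval n J then
    (if h : qv n ct J t - 1 < n then lbar ⟨qv n ct J t - 1, h⟩ else 0)
  else 0

/-- `n_s^λ(a)` is maximal among all `Φ_I`-regular weights in the orbit of `λ`. -/
def IsMaxN (n : ℕ) (ct : CType) (I : Finset (Fin n)) (lam : V n) (s : ℕ) (a : ℝ) : Prop :=
  ∀ mu : V n, WOrb n ct lam mu → RegI n ct I mu →
    nsl n ct I mu s a ≤ nsl n ct I lam s a

/-- The exceptional configurations of Proposition 4.7 (types `B` and `C`, with
`shortR i` the short/long root `e_i` resp. `2e_i`). -/
def ExcBC (n : ℕ) (ct : CType) (I : Finset (Fin n)) (shortR : Fin n → V n)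
    (lam β : V n) : Prop :=
  ∃ s : ℕ, 1 ≤ s ∧ s < mval n I ∧ ∃ a : ℝ, 0 < a ∧
    nsl n ct I lam s a = 1 ∧
    nsl n ct I lam s 0 + nsl n ct I lam (mval n I) a = 1 ∧
    ((∃ i j : Fin n, InSeg n ct I s i ∧ InSeg n ct I s j ∧
        |lam i| = a ∧ lam j = 0 ∧ (β = shortR i ∨ β = ee i + ee j)) ∨
     (∃ i j : Fin n, InSeg n ct I s i ∧ InSeg n ct I (mval n I) j ∧
        ((lam i = a ∧ lam j = a) ∨ (lam i = -a ∧ lam j = -a)) ∧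
        (β = shortR i ∨ β = ee i + ee j)) ∨
     (∃ i j : Fin n, InSeg n ct I s i ∧ InSeg n ct I (mval n I) j ∧
        ((lam i = a ∧ lam j = -a) ∨ (lam i = -a ∧ lam j = a)) ∧
        (β = shortR i ∨ β = ee i - ee j)))

/-- The exceptional configurations of Proposition 4.7 (type `D`). -/
def ExcD (n : ℕ) (I : Finset (Fin n)) (lam β : V n) : Prop :=
  ∃ s : ℕ, 1 ≤ s ∧ s < mval n I ∧ ∃ a : ℝ, 0 < a ∧
    nsl n CType.D I lam s a = 1 ∧ nsl n CType.D I lam (mval n I) a = 1 ∧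
    nsl n CType.D I lam s 0 = 1 ∧ nsl n CType.D I lam (mval n I) 0 = 1 ∧
    ∃ i j k l : Fin n, InSeg n CType.D I s i ∧ InSeg n CType.D I s j ∧
      InSeg n CType.D I (mval n I) k ∧ InSeg n CType.D I (mval n I) l ∧
      lam j = 0 ∧ lam l = 0 ∧
      ((((lam i = a ∧ lam k = a) ∨ (lam i = -a ∧ lam k = -a)) ∧
          (β = ee i + ee j ∨ β = ee i + ee k)) ∨
       (((lam i = a ∧ lam k = -a) ∨ (lam i = -a ∧ lam k = a)) ∧
          (β = ee i + ee j ∨ β = ee i - ee k)))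

/-- The exceptional configurations in which `β` fails to be a linked root. -/
def Exc (n : ℕ) (ct : CType) (I : Finset (Fin n)) (lam β : V n) : Prop :=
  match ct with
  | CType.B => ExcBC n CType.B I (fun i => ee i) lam β
  | CType.C => ExcBC n CType.C I (fun i => (2:ℝ) • ee i) lam β
  | CType.D => ExcD n I lam β

/-- `β` is a linked root of the `Φ_I`-regular weight `λ` (for standard `I`). -/
def PlainLinked (n : ℕ) (ct : CType) (I : Finset (Fin n)) (lam β : V n) : Prop :=
  RegI n ct I lam ∧ β ∈ PhiPos n ct ∧ β ∉ PhiI n ct I ∧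
  RegI n ct I (sRefl β lam) ∧ sRefl β lam ≠ lam ∧ ¬ Exc n ct I lam β

/-- The transposition of the last two indices. -/
def swapLast (n : ℕ) (j : Fin n) : Fin n :=
  if j.1 = n - 1 then ⟨n - 2, Nat.sub_lt j.pos (by norm_num)⟩
  else if j.1 = n - 2 then ⟨n - 1, Nat.sub_lt j.pos (by norm_num)⟩
  else j

/-- The isomorphism `φ = s_{e_n}` (negating the last coordinate). -/
def phiW {n : ℕ} (x : V n) : V n := fun j => if j.1 = n - 1 then -x j else x j

/-- The image `φ(I)` of an index set under `φ` (interchanging `α_{n-1}` and `α_n`). -/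
def phiIdx (n : ℕ) (I : Finset (Fin n)) : Finset (Fin n) := I.image (swapLast n)

/-- `β` is a linked root of `λ`; for nonstandard `I` the notion is transported along `φ`. -/
def LinkedRoot (n : ℕ) (ct : CType) (I : Finset (Fin n)) (lam β : V n) : Prop :=
  if StandardI n ct I then PlainLinked n ct I lam β
  else PlainLinked n ct (phiIdx n I) (phiW lam) (phiW β)

/-- One step in a connecting chain: `y ∈ W_I x`, or `y = w s_β x` for a linked root `β` of `x`. -/
def ConnStep (n : ℕ) (ct : CType) (I : Finset (Fin n)) (x y : V n) : Prop :=
  RegI n ct I x ∧ RegI n ct I y ∧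
  (WIOrb n ct I x y ∨ ∃ β : V n, LinkedRoot n ct I x β ∧ WIOrb n ct I (sRefl β x) y)

/-- `λ ⟷ μ`: `λ` and `μ` are connected by a chain of linked roots. -/
def Conn (n : ℕ) (ct : CType) (I : Finset (Fin n)) (lam mu : V n) : Prop :=
  RegI n ct I lam ∧ RegI n ct I mu ∧
  Relation.ReflTransGen (ConnStep n ct I) lam mu

/-- The set `^IW^Jλ̄ = Wλ̄ ∩ Λ_I⁺` of weights parametrizing the simple modules. -/
def IWJset (n : ℕ) (ct : CType) (I : Finset (Fin n)) (lbar : V n) : Set (V n) :=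
  {mu | WOrb n ct lbar mu ∧ LamIPlus n ct I mu}

/-- `(S, S̄)` is a separable pair for the weight `λ`. -/
def IsSepPair (n : ℕ) (ct : CType) (I J : Finset (Fin n)) (lbar lam : V n)
    (S Sb : Finset ℕ) : Prop :=
  S.Nonempty ∧ Sb.Nonempty ∧
  S ⊆ Finset.Icc 1 (mval n I) ∧ Sb ⊆ Finset.Icc 1 (mval n J) ∧
  1 < mval n I ∧ 1 < mval n J ∧
  (∀ s ∈ S, ∀ t ∈ Sb, IsMaxN n ct I lam s (aval n ct J lbar t)) ∧
  (∀ s ∈ Finset.Icc 1 (mval n I), s ∉ S →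
     ∀ t ∈ Finset.Icc 1 (mval n J), t ∉ Sb →
       nsl n ct I lam s (aval n ct J lbar t) = 0) ∧
  (match ct with
   | CType.B => (mval n I ∈ S ↔ mval n J ∉ Sb)
   | CType.C => (mval n I ∈ S ↔ mval n J ∉ Sb)
   | CType.D => (mval n I ∈ S ↔ mval n J ∈ Sb))

/-- `𝒟`: the set of separable pairs of the system `(Φ, Φ_I, Φ_J)`. -/
def DSet (n : ℕ) (ct : CType) (I J : Finset (Fin n)) (lbar : V n) :
    Set (Finset ℕ × Finset ℕ) :=
  {p | ∀ lam ∈ IWJset n ct I lbar, IsSepPair n ct I J lbar lam p.1 p.2}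

/-- The four weakly separable pairs. -/
def IsWeakPair (n : ℕ) (I J : Finset (Fin n)) (p : Finset ℕ × Finset ℕ) : Prop :=
  p = (Finset.Icc 1 (mval n I - 1), {mval n J}) ∨
  p = (Finset.Icc 1 (mval n I), {mval n J}) ∨
  p = ({mval n I}, Finset.Icc 1 (mval n J - 1)) ∨
  p = ({mval n I}, Finset.Icc 1 (mval n J))

/-- The system `(Φ, Φ_I, Φ_J)` is separable. -/
def SepSys (n : ℕ) (ct : CType) (I J : Finset (Fin n)) (lbar : V n) : Prop :=
  (DSet n ct I J lbar).Nonempty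

/-- The system `(Φ, Φ_I, Φ_J)` is strongly separable. -/
def StronglySepSys (n : ℕ) (ct : CType) (I J : Finset (Fin n)) (lbar : V n) : Prop :=
  ∃ p ∈ DSet n ct I J lbar, ¬ IsWeakPair n I J p

/-- The system `(Φ, Φ_I, Φ_J)` is weakly separable. -/
def WeaklySepSys (n : ℕ) (ct : CType) (I J : Finset (Fin n)) (lbar : V n) : Prop :=
  SepSys n ct I J lbar ∧ ∀ p ∈ DSet n ct I J lbar, IsWeakPair n I J p

/-- The partial ordering on separable pairs: `(S₁,S̄₁) ≤ (S₂,S̄₂)` iff `S₁ ⊆ S₂`, `S̄₁ ⊇ S̄₂`. -/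
def pairLE (p q : Finset ℕ × Finset ℕ) : Prop := p.1 ⊆ q.1 ∧ q.2 ⊆ p.2

/-- Strict version of `pairLE`. -/
def pairLT (p q : Finset ℕ × Finset ℕ) : Prop := pairLE p q ∧ p ≠ q

/-- The generating relations of the equivalence `∼` on `𝒟`. -/
def PairRel (D : Set (Finset ℕ × Finset ℕ)) (p q : Finset ℕ × Finset ℕ) : Prop :=
  p ∈ D ∧ q ∈ D ∧ ((p.2 = q.2 ∧ p.1 ⊆ q.1) ∨ (p.1 = q.1 ∧ p.2 ⊆ q.2))

/-- The equivalence relation `∼` on separable pairs. -/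
def PairEquiv (D : Set (Finset ℕ × Finset ℕ)) :
    Finset ℕ × Finset ℕ → Finset ℕ × Finset ℕ → Prop :=
  Relation.EqvGen (PairRel D)

/-- A trivial separable pair. -/
def TrivialPair (n : ℕ) (ct : CType) (I J : Finset (Fin n)) (lbar : V n)
    (p : Finset ℕ × Finset ℕ) : Prop :=
  match ct with
  | CType.B | CType.C =>
    (∃ s0 : ℕ, 1 ≤ s0 ∧ s0 < mval n I ∧
       PairEquiv (DSet n ct I J lbar) p ({s0}, Finset.Icc 1 (mval n J))) ∨
    (∃ t0 : ℕ, 1 ≤ t0 ∧ t0 < mval n J ∧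
       PairEquiv (DSet n ct I J lbar) p (Finset.Icc 1 (mval n I), {t0}))
  | CType.D =>
    (∃ s0 : ℕ, 1 ≤ s0 ∧ s0 < mval n I ∧
       PairEquiv (DSet n ct I J lbar) p ({s0}, Finset.Icc 1 (mval n J - 1))) ∨
    (∃ t0 : ℕ, 1 ≤ t0 ∧ t0 < mval n J ∧
       PairEquiv (DSet n ct I J lbar) p (Finset.Icc 1 (mval n I - 1), {t0}))

/-- The set of blocks: equivalence classes of `^IW^Jλ̄` under `⟷`. -/
def BlockSet (n : ℕ) (ct : CType) (I : Finset (Fin n)) (lbar : V n) : Set (Set (V n)) :=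
  {Cl | ∃ lam ∈ IWJset n ct I lbar,
     Cl = {mu | mu ∈ IWJset n ct I lbar ∧ Conn n ct I lam mu}}

/-- The parity `P(λ)` of the number of negative entries of `λ`. -/
def Pfun (n : ℕ) (lam : V n) : ℕ :=
  (Finset.univ.filter (fun i : Fin n => lam i < 0)).card % 2

/-- A fundamental chain `c 1 ∼ c 2 ∼ … ∼ c k` in `𝒟`. -/
def IsFundChain (D : Set (Finset ℕ × Finset ℕ)) (c : ℕ → Finset ℕ × Finset ℕ)
    (k : ℕ) : Prop :=
  1 ≤ k ∧ (∀ i, 1 ≤ i → i ≤ k → c i ∈ D) ∧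
  (∀ i, 1 ≤ i → i < k →
     ((c i).1 = (c (i+1)).1 ∨ (c i).2 = (c (i+1)).2) ∧
     (pairLT (c i) (c (i+1)) ∨ pairLT (c (i+1)) (c i)))

/-- The list of parts of the partition `π_I`. -/
def piParts (n : ℕ) (ct : CType) (I : Finset (Fin n)) : List ℕ :=
  (List.range (mval n I - 1)).map (fun s => nsval n ct I (s+1)) ++
  (List.range (mval n I - 1)).map (fun s => nsval n ct I (s+1)) ++
  (match ct with
   | CType.B => [2 * nsval n ct I (mval n I) + 1]
   | CType.C => [2 * nsval n ct I (mval n I)]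
   | CType.D => if nsval n ct I (mval n I) = 0 then []
                else [2 * nsval n ct I (mval n I) - 1, 1])

/-- The `i`-th part (`1`-based) of the partition with list of parts `L`. -/
def partAt (L : List ℕ) (i : ℕ) : ℕ :=
  (L.mergeSort (fun a b => decide (b ≤ a))).getD (i - 1) 0

/-- The `i`-th part (`1`-based) of the dual partition `π^t`: the number of parts `≥ i`. -/
def dualAt (L : List ℕ) (i : ℕ) : ℕ :=
  (L.filter (fun x => decide (i ≤ x))).length

/-- `k` is compatible with the system `(Φ, Φ_I, Φ_J)`. -/
def CompatibleK (n : ℕ) (ct : CType) (I J : Finset (Fin n)) (k : ℕ) : Prop :=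
  1 ≤ k ∧ k ≤ 2 * mval n I - 1 ∧
  (match ct with
   | CType.B =>
     (Odd k ∧ k ≤ partAt (piParts n CType.B J) 2 ∧
        2 * nsval n CType.B J (mval n J) + 1 ≤ k ∧
        partAt (piParts n CType.B I) k ≤ 2 * nsval n CType.B I (mval n I) + 1) ∨
     (Even k ∧ k ≤ 2 * nsval n CType.B J (mval n J) ∧
        2 * nsval n CType.B I (mval n I) + 1 ≤ partAt (piParts n CType.B I) k)
   | CType.C =>
     (Odd k ∧ k ≤ partAt (piParts n CType.C J) 2 ∧
        2 * nsval n CType.C J (mval n J) + 1 ≤ k ∧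
        partAt (piParts n CType.C I) k ≤ 2 * nsval n CType.C I (mval n I)) ∨
     (Even k ∧ k ≤ 2 * nsval n CType.C J (mval n J) ∧
        2 * nsval n CType.C I (mval n I) + 1 ≤ partAt (piParts n CType.C I) k)
   | CType.D =>
     (Even k ∧ k ≤ partAt (piParts n CType.D J) 2 ∧
        2 * nsval n CType.D J (mval n J) ≤ k ∧
        2 * nsval n CType.D I (mval n I) ≤ partAt (piParts n CType.D I) k) ∨
     (Odd k ∧ k ≤ 2 * nsval n CType.D J (mval n J) - 1 ∧
        partAt (piParts n CType.D I) k ≤ 2 * nsval n CType.D I (mval n I) - 1))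

/-- `s_{e_{k_1}}^{ε_1} ⋯ s_{e_{k_r}}^{ε_r} μ`. -/
def applyFlips (n : ℕ) (ks : ℕ → Fin n) (eps : ℕ → Bool) : ℕ → V n → V n
  | 0, v => v
  | (r+1), v =>
      if eps (r+1) then sRefl (ee (ks (r+1))) (applyFlips n ks eps r v)
      else applyFlips n ks eps r v

end


/-- number of indices outside `I` before `p` -/
def cc {n : ℕ} (I : Finset (Fin n)) (p : Fin n) : ℕ :=
  ((Finset.univ \ I).filter (fun k => k < p)).card

def Low {n : ℕ} (I : Finset (Fin n)) (p : Fin n) : Prop :=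
  cc I p < (Finset.univ \ I).card

theorem list_aux (L : List ℕ) (hL : L.Pairwise (· < ·)) (x : ℕ) :
    ∀ k, k < L.length → (x < L.getD k 0 ↔ (L.filter (fun y => decide (y ≤ x))).length ≤ k) := by
  induction L with
  | nil => intro k hk; simp at hk
  | cons a L ih =>
    rw [List.pairwise_cons] at hL
    obtain ⟨h1, h2⟩ := hL
    intro k hk
    by_cases hx : x < a
    · have hf : (L.filter (fun y => decide (y ≤ x))) = [] := by
        rw [List.filter_eq_nil_iff]
        intro y hy
        have := h1 y hy
        simp; omega
      have : ¬ a ≤ x := by omega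
      rw [List.filter_cons]
      simp only [this, decide_false, hf]
      cases k with
      | zero => simp [hx]
      | succ k =>
        have hk' : k < L.length := by simpa using hk
        have := h1 (L[k]) (List.getElem_mem hk')
        simp [List.getD_eq_getElem?_getD, hk']
        omega
    · have hx' : a ≤ x := by omega
      rw [List.filter_cons]
      simp only [hx', decide_true, if_true, List.length_cons]
      cases k with
      | zero => simp [hx']
      | succ k =>
        have hk' : k < L.length := by simpa using hk
        have := ih h2 k hk'
        simp only [List.getD_cons_succ]
        rw [this]; omega

theorem qlist_sorted (n : ℕ) (I : Finset (Fin n)) : (Qlist n I).Pairwise (· < ·) := by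
  unfold Qlist
  rw [List.pairwise_map]
  have := (Finset.sortedLT_sort (Finset.univ \ I)).pairwise
  exact this.imp (fun h => by simpa using h)

theorem qlist_len (n : ℕ) (I : Finset (Fin n)) :
    (Qlist n I).length = (Finset.univ \ I).card := by
  simp [Qlist]

theorem qlist_cc (n : ℕ) (I : Finset (Fin n)) (p : Fin n) :
    ((Qlist n I).filter (fun y => decide (y ≤ p.1))).length = cc I p := by
  unfold Qlist cc
  rw [List.filter_map, List.length_map]
  rw [← List.toFinset_card_of_nodup ((Finset.sort_nodup _ _).filter _)]
  congr 1
  ext k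
  simp [Nat.succ_le_iff]

theorem cc_le {n : ℕ} (I : Finset (Fin n)) (p : Fin n) : cc I p ≤ (Finset.univ \ I).card :=
  Finset.card_filter_le _ _

theorem inseg_iff {n : ℕ} {ct : CType} {I : Finset (Fin n)} (hstd : StandardI n ct I)
    {s : ℕ} (hs1 : 1 ≤ s) (hsm : s ≤ mval n I) (p : Fin n) :
    InSeg n ct I s p ↔ cc I p + 1 = s := by
  have hq : ∀ s, qv n ct I s = qval n I s := by intro s; simp [qv, hstd]
  have key := list_aux (Qlist n I) (qlist_sorted n I) p.1
  rw [qlist_cc] at key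
  have hle := cc_le I p
  have hlen := qlist_len n I
  unfold mval at hsm
  have hA : qval n I (s-1) < p.1 + 1 ↔ s ≤ cc I p + 1 := by
    unfold qval mval
    by_cases h : s - 1 = 0
    · simp [h]; omega
    · have h2 : s - 1 < (Qlist n I).length + 1 := by omega
      simp only [h, h2, if_true, if_false]
      have := key (s-1-1) (by omega)
      omega
  have hB : p.1 + 1 ≤ qval n I s ↔ cc I p + 1 ≤ s := by
    unfold qval mval
    by_cases h : s < (Qlist n I).length + 1
    · have h0 : s ≠ 0 := by omega
      simp only [h, h0, if_true, if_false]
      have := key (s-1) (by omega)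
      omega
    · have h0 : s ≠ 0 := by omega
      simp only [h, h0, if_false]
      have := p.2
      omega
  unfold InSeg
  rw [hq, hq, hA, hB]
  omega

theorem not_low_iff {n : ℕ} {I : Finset (Fin n)} {p : Fin n} :
    ¬ Low I p ↔ ∀ k, k ∉ I → k < p := by
  unfold Low cc
  rw [not_lt]
  constructor
  · intro h k hk
    have := Finset.eq_of_subset_of_card_le (Finset.filter_subset _ _) h
    have hk' : k ∈ Finset.univ \ I := by simp [hk]
    rw [← this] at hk'
    exact (Finset.mem_filter.1 hk').2
  · intro h
    rw [Finset.filter_true_of_mem]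
    intro k hk
    exact h k (by simpa using hk)

theorem cc_eq_of {n : ℕ} {I : Finset (Fin n)} {p q : Fin n}
    (h : ∀ k, k ∉ I → (k < p ↔ k < q)) : cc I p = cc I q := by
  unfold cc
  congr 1
  apply Finset.filter_congr
  intro k hk
  exact h k (by simpa using hk)

theorem cc_eq_mem {n : ℕ} {I : Finset (Fin n)} {p q : Fin n} (hpq : p ≤ q)
    (h : cc I p = cc I q) : ∀ k, p ≤ k → k < q → k ∈ I := by
  intro k h1 h2
  by_contra hk
  unfold cc at h
  have hsub : (Finset.univ \ I).filter (fun k => k < p) ⊆ (Finset.univ \ I).filter (fun k => k < q) := by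
    intro x hx
    rw [Finset.mem_filter] at hx ⊢
    exact ⟨hx.1, lt_of_lt_of_le hx.2 hpq⟩
  have := Finset.eq_of_subset_of_card_le hsub h.ge
  have hk' : k ∈ (Finset.univ \ I).filter (fun k => k < q) := by simp [hk, h2]
  rw [← this] at hk'
  have := (Finset.mem_filter.1 hk').2
  exact absurd h1 (not_le.2 this)

theorem cc_mono {n : ℕ} {I : Finset (Fin n)} {p q : Fin n} (hpq : p ≤ q) : cc I p ≤ cc I q := by
  apply Finset.card_le_card
  intro x hx
  rw [Finset.mem_filter] at hx ⊢
  exact ⟨hx.1, lt_of_lt_of_le hx.2 hpq⟩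

theorem ee_apply {n : ℕ} (i k : Fin n) : ee i k = if k = i then (1:ℝ) else 0 := by
  simp [ee, Pi.single_apply]

theorem inn_ee {n : ℕ} (x : V n) (i : Fin n) : inn x (ee i) = x i := by
  simp [inn, ee_apply]

theorem inn_add {n : ℕ} (x y z : V n) : inn x (y + z) = inn x y + inn x z := by
  simp [inn, mul_add, Finset.sum_add_distrib]

theorem inn_sub {n : ℕ} (x y z : V n) : inn x (y - z) = inn x y - inn x z := by
  simp [inn, mul_sub, Finset.sum_sub_distrib]

theorem inn_neg {n : ℕ} (x y : V n) : inn x (-y) = - inn x y := by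
  simp [inn]

theorem inn_smul {n : ℕ} (x y : V n) (c : ℝ) : inn x (c • y) = c * inn x y := by
  simp only [inn, Finset.mul_sum]
  apply Finset.sum_congr rfl
  intro i _
  simp; ring

theorem sRefl_ee {n : ℕ} (i : Fin n) (x : V n) :
    sRefl (ee i) x = fun k => if k = i then - x k else x k := by
  funext k
  simp only [sRefl, inn_ee, Pi.sub_apply, Pi.smul_apply, ee_apply, smul_eq_mul]
  by_cases h : k = i
  · subst h; simp; ring
  · simp [h]

theorem sRefl_minus {n : ℕ} {p q : Fin n} (h : p ≠ q) (x : V n) :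
    sRefl (ee p - ee q) x = fun k => x (Equiv.swap p q k) := by
  funext k
  have h' : q ≠ p := h.symm
  have e : inn (ee p - ee q) (ee p - ee q) = 2 := by
    rw [inn_sub, inn_ee, inn_ee]; simp [ee_apply, h, h']; norm_num
  simp only [sRefl, e, inn_sub, inn_ee, Pi.sub_apply, Pi.smul_apply, ee_apply, smul_eq_mul,
    Equiv.swap_apply_def]
  split_ifs with h1 h2 h3
  · exact absurd (h1.symm.trans h2) h
  · subst h1; ring
  · subst h3; ring
  · ring

def plusR {n : ℕ} (p q : Fin n) (x : V n) : V n :=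
  fun k => if k = p then - x q else if k = q then - x p else x k

theorem sRefl_plus {n : ℕ} {p q : Fin n} (h : p ≠ q) (x : V n) :
    sRefl (ee p + ee q) x = plusR p q x := by
  funext k
  have h' : q ≠ p := h.symm
  have e : inn (ee p + ee q) (ee p + ee q) = 2 := by
    rw [inn_add, inn_ee, inn_ee]; simp [ee_apply, h, h']; norm_num
  simp only [plusR, sRefl, e, inn_add, inn_ee, Pi.add_apply, Pi.sub_apply, Pi.smul_apply, ee_apply,
    smul_eq_mul]
  split_ifs with h1 h2 h3
  · exact absurd (h1.symm.trans h2) h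
  · subst h1; ring
  · subst h3; ring
  · ring

theorem alpha_of_lt {n : ℕ} (ct : CType) (i : Fin n) (h : i.1 + 1 < n) :
    alphaR n ct i = ee i - ee ⟨i.1 + 1, h⟩ := by
  simp [alphaR, h]

theorem minus_mem_span {n : ℕ} (ct : CType) (I : Finset (Fin n)) (p : Fin n) :
    ∀ (d : ℕ) (hd : p.1 + d < n), (∀ k : Fin n, p ≤ k → k.1 < p.1 + d → k ∈ I) →
    ee p - ee ⟨p.1 + d, hd⟩ ∈ Submodule.span ℝ (alphaR n ct '' (I : Set (Fin n))) := by
  intro d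
  induction d with
  | zero => intro hd _; simp
  | succ d ih =>
    intro hd hI
    have h1 := ih (by omega) (fun k hk hk' => hI k hk (by omega))
    have h2 : alphaR n ct ⟨p.1 + d, by omega⟩ ∈
        Submodule.span ℝ (alphaR n ct '' (I : Set (Fin n))) := by
      apply Submodule.subset_span
      refine ⟨_, hI ⟨p.1 + d, by omega⟩ ?_ ?_, rfl⟩
      · rw [Fin.le_def]; simp
      · simp
    rw [alpha_of_lt ct _ (by simp; omega)] at h2
    have := Submodule.add_mem _ h1 h2
    simpa [add_assoc] using this

theorem minus_mem_Phi {n : ℕ} (ct : CType) {p q : Fin n} (h : p ≠ q) :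
    ee p - ee q ∈ Phi n ct := by
  have : ee p - ee q ∈ DRoots n := ⟨p, q, h, Or.inr (Or.inl rfl)⟩
  cases ct
  · exact Or.inl this
  · exact Or.inl this
  · exact this

theorem plus_mem_Phi {n : ℕ} (ct : CType) {p q : Fin n} (h : p ≠ q) :
    ee p + ee q ∈ Phi n ct := by
  have : ee p + ee q ∈ DRoots n := ⟨p, q, h, (Or.inl rfl)⟩
  cases ct
  · exact Or.inl this
  · exact Or.inl this
  · exact this

theorem reg_ne {n : ℕ} {ct : CType} {I : Finset (Fin n)} {x : V n} (hreg : RegI n ct I x)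
    {p q : Fin n} (h : p ≠ q) (hc : cc I p = cc I q) : x p ≠ x q := by
  wlog hpq : p < q generalizing p q
  · exact (this h.symm hc.symm (lt_of_le_of_ne (not_lt.1 hpq) h.symm)).symm
  have hI := cc_eq_mem hpq.le hc
  have hpq' : p.1 < q.1 := hpq
  have := minus_mem_span ct I p (q.1 - p.1) (by have := q.2; omega)
    (fun k h1 h2 => hI k h1 (by rw [Fin.lt_def]; omega))
  have e : (⟨p.1 + (q.1 - p.1), by have := q.2; omega⟩ : Fin n) = q := by
    apply Fin.ext; simp; omega
  rw [e] at this
  have h3 := hreg _ ⟨minus_mem_Phi ct h, this⟩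
  rw [inn_sub, inn_ee, inn_ee] at h3
  intro h4
  exact h3 (by rw [h4]; ring)

def FF {n : ℕ} (k : Fin n) (v : V n) : ℝ := ∑ i, v i * (if i ≤ k then 1 else 0)

theorem FF_eq {n : ℕ} (k : Fin n) (v : V n) :
    FF k v = inn (fun i => if i ≤ k then (1:ℝ) else 0) v := by
  unfold FF inn
  exact Finset.sum_congr rfl (fun i _ => mul_comm _ _)

theorem FF_span {n : ℕ} {ct : CType} {I : Finset (Fin n)} (hstd : StandardI n ct I)
    {k : Fin n} (hk : k ∉ I) {v : V n}
    (hv : v ∈ Submodule.span ℝ (alphaR n ct '' (I : Set (Fin n)))) : FF k v = 0 := by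
  rw [FF_eq]
  induction hv using Submodule.span_induction with
  | mem x hx =>
    obtain ⟨i, hi, rfl⟩ := hx
    have hik : i ≠ k := by rintro rfl; exact hk hi
    by_cases h : i.1 + 1 < n
    · rw [alpha_of_lt ct i h, inn_sub, inn_ee, inn_ee]
      have : i.1 ≠ k.1 := fun h => hik (Fin.ext h)
      by_cases h1 : i ≤ k
      · have h2 : (⟨i.1 + 1, h⟩ : Fin n) ≤ k := by
          rw [Fin.le_def] at h1 ⊢; simp; omega
        simp [h1, h2]
      · have h2 : ¬ (⟨i.1 + 1, h⟩ : Fin n) ≤ k := by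
          rw [Fin.le_def] at h1 ⊢; simp; omega
        simp [h1, h2]
    · have hi1 : i.1 = n - 1 := by have := i.2; omega
      have h1 : ¬ i ≤ k := by
        intro h1
        apply hik
        apply Fin.ext
        have := k.2
        rw [Fin.le_def] at h1
        omega
      have hlast : i.1 ≠ k.1 := fun h => hik (Fin.ext h)
      cases ct with
      | B => simp only [alphaR, h, dite_false, inn_ee]; simp [h1]
      | C => simp only [alphaR, h, dite_false, inn_smul, inn_ee]; simp [h1]
      | D =>
        simp only [alphaR, h, dite_false, inn_add, inn_ee]
        have hn : 2 ≤ n := by have := k.2; have := i.2; omega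
        have hs := hstd rfl hn
        have ei : (⟨n - 1, by omega⟩ : Fin n) = i := Fin.ext hi1.symm
        rw [ei] at hs
        have hi' : i ∈ I := hi
        have hs' := hs.resolve_right (by simpa using hi')
        have h2 : ¬ (⟨n - 2, by omega⟩ : Fin n) ≤ k := by
          intro h2
          rw [Fin.le_def] at h2
          simp at h2
          have : k = ⟨n - 2, by omega⟩ := by
            apply Fin.ext; simp; have := k.2; omega
          exact hk (this ▸ hs')
        simp [h1, h2]
  | zero => simp [inn]
  | add x y _ _ hx hy => rw [inn_add, hx, hy]; simp
  | smul c x _ hx => rw [inn_smul, hx]; simp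

theorem lastReg {n : ℕ} {ct : CType} {I : Finset (Fin n)} (hstd : StandardI n ct I)
    {β : V n} (hβ : β ∈ PhiI n ct I) :
    (∃ p q, p ≠ q ∧ β = ee p - ee q ∧ cc I p = cc I q) ∨ (∀ k, β k ≠ 0 → ¬ Low I k) := by
  obtain ⟨h1, h2⟩ := hβ
  have hF : ∀ k, k ∉ I → inn (fun i => if i ≤ k then (1:ℝ) else 0) β = 0 := by
    intro k hk
    rw [← FF_eq]; exact FF_span hstd hk h2
  have hD : β ∈ DRoots n ∨ ∃ i, ∃ c : ℝ, c ≠ 0 ∧ β = c • ee i := by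
    cases ct with
    | B =>
      rcases h1 with h1 | ⟨i, h1 | h1⟩
      · exact Or.inl h1
      · exact Or.inr ⟨i, 1, one_ne_zero, by simp [h1]⟩
      · exact Or.inr ⟨i, -1, by norm_num, by simp [h1]⟩
    | C =>
      rcases h1 with h1 | ⟨i, h1 | h1⟩
      · exact Or.inl h1
      · exact Or.inr ⟨i, 2, two_ne_zero, by simp [h1]⟩
      · exact Or.inr ⟨i, -2, by norm_num, by simp [h1]⟩
    | D => exact Or.inl h1
  rcases hD with ⟨p, q, hpq, rfl | rfl | rfl⟩ | ⟨i, c, hc, rfl⟩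
  · right
    have hlow : ∀ k, k ∉ I → k < p ∧ k < q := by
      intro k hk
      have := hF k hk
      rw [inn_add, inn_ee, inn_ee] at this
      rw [← not_le, ← not_le]
      by_cases h1 : p ≤ k <;> by_cases h2 : q ≤ k <;> simp [h1, h2] at this ⊢
      all_goals norm_num at this
    intro k hk
    rw [not_low_iff]
    intro k' hk'
    have := hlow k' hk'
    simp only [Pi.add_apply, ee_apply] at hk
    by_cases h1 : k = p
    · rw [h1]; exact this.1
    · by_cases h2 : k = q
      · rw [h2]; exact this.2
      · simp [h1, h2] at hk
  · left
    refine ⟨p, q, hpq, rfl, cc_eq_of ?_⟩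
    intro k hk
    have := hF k hk
    rw [inn_sub, inn_ee, inn_ee] at this
    rw [← not_le, ← not_le]
    by_cases h1 : p ≤ k <;> by_cases h2 : q ≤ k <;> simp [h1, h2] at this ⊢
  · right
    have hlow : ∀ k, k ∉ I → k < p ∧ k < q := by
      intro k hk
      have := hF k hk
      rw [inn_sub, inn_neg, inn_ee, inn_ee] at this
      rw [← not_le, ← not_le]
      by_cases h1 : p ≤ k <;> by_cases h2 : q ≤ k <;> simp [h1, h2] at this ⊢
      all_goals norm_num at this
    intro k hk
    rw [not_low_iff]
    intro k' hk'
    have := hlow k' hk'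
    simp only [Pi.sub_apply, Pi.neg_apply, ee_apply] at hk
    by_cases h1 : k = p
    · rw [h1]; exact this.1
    · by_cases h2 : k = q
      · rw [h2]; exact this.2
      · simp [h1, h2] at hk
  · right
    intro k hk
    have hki : k = i := by
      by_contra h
      simp [ee_apply, h] at hk
    subst hki
    rw [not_low_iff]
    intro k' hk'
    have := hF k' hk'
    rw [inn_smul, inn_ee] at this
    rw [← not_le]
    intro h
    simp [h] at this
    exact hc this

theorem reg_of {n : ℕ} {ct : CType} {I : Finset (Fin n)} (hstd : StandardI n ct I)
    {x y : V n} (hx : RegI n ct I x) (hag : ∀ k, ¬ Low I k → y k = x k)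
    (hne : ∀ p q, p ≠ q → cc I p = cc I q → Low I p → y p ≠ y q) : RegI n ct I y := by
  intro β hβ
  have main : (∀ k, β k ≠ 0 → ¬ Low I k) → inn y β ≠ 0 := by
    intro h
    have : inn y β = inn x β := by
      unfold inn
      apply Finset.sum_congr rfl
      intro k _
      by_cases hk : β k = 0
      · simp [hk]
      · rw [hag k (h k hk)]
    rw [this]
    exact hx β hβ
  rcases lastReg hstd hβ with ⟨p, q, hpq, rfl, hc⟩ | h
  · by_cases hl : Low I p
    · rw [inn_sub, inn_ee, inn_ee]
      exact sub_ne_zero.2 (hne p q hpq hc hl)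
    · apply main
      intro k hk
      by_cases h1 : k = p
      · rw [h1]; exact hl
      · by_cases h2 : k = q
        · rw [h2]; unfold Low at hl ⊢; rw [← hc]; exact hl
        · simp [ee_apply, h1, h2] at hk
  · exact main h

theorem not_exc {n : ℕ} {ct : CType} {I : Finset (Fin n)} (hstd : StandardI n ct I)
    {x β : V n} {p q : Fin n} (hpq : p ≠ q) (hp : β p ≠ 0) (hq : β q ≠ 0)
    (h0 : ∀ k, β k ≠ 0 → Low I k ∧ x k ≠ 0) : ¬ Exc n ct I x β := by
  have hm : ∀ k, InSeg n ct I (mval n I) k → ¬ Low I k := by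
    intro k hk
    rw [inseg_iff hstd (by unfold mval; omega) le_rfl] at hk
    unfold mval at hk
    rw [qlist_len] at hk
    unfold Low; omega
  have hs : ∀ s k, 1 ≤ s → s < mval n I → InSeg n ct I s k → Low I k := by
    intro s k h1 h2 hk
    rw [inseg_iff hstd h1 h2.le] at hk
    unfold mval at h2
    rw [qlist_len] at h2
    unfold Low; omega
  have hshort : ∀ (c : ℝ) (i : Fin n), β ≠ c • ee i := by
    intro c i h
    rw [h] at hp hq
    apply hpq
    have h1 : p = i := by by_contra h; simp [ee_apply, h] at hp
    have h2 : q = i := by by_contra h; simp [ee_apply, h] at hq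
    rw [h1, h2]
  have hshort1 : ∀ (i : Fin n), β ≠ ee i := by
    intro i h; exact hshort 1 i (by simpa using h)
  have hplus : ∀ i j : Fin n, β = ee i + ee j → Low I j ∧ x j ≠ 0 := by
    intro i j h
    apply h0
    rw [h]
    simp only [Pi.add_apply, ee_apply, if_true]
    split_ifs <;> norm_num
  have hminus : ∀ i j : Fin n, Low I i → ¬ Low I j → β ≠ ee i - ee j := by
    intro i j hi hj h
    have hij : j ≠ i := by rintro rfl; exact hj hi
    apply hj
    apply (h0 j _).1
    rw [h]
    simp [ee_apply, hij]
  cases ct with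
  | B =>
    rintro ⟨s, h1, h2, a, ha, _, _, ⟨i, j, hi, hj, _, h3, h4 | h4⟩ | ⟨i, j, hi, hj, _, h4 | h4⟩ |
      ⟨i, j, hi, hj, _, h4 | h4⟩⟩
    · exact hshort1 _ h4
    · exact (hplus _ _ h4).2 h3
    · exact hshort1 _ h4
    · exact hm _ hj (hplus _ _ h4).1
    · exact hshort1 _ h4
    · exact hminus _ _ (hs _ _ h1 h2 hi) (hm _ hj) h4
  | C =>
    rintro ⟨s, h1, h2, a, ha, _, _, ⟨i, j, hi, hj, _, h3, h4 | h4⟩ | ⟨i, j, hi, hj, _, h4 | h4⟩ |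
      ⟨i, j, hi, hj, _, h4 | h4⟩⟩
    · exact hshort _ _ h4
    · exact (hplus _ _ h4).2 h3
    · exact hshort _ _ h4
    · exact hm _ hj (hplus _ _ h4).1
    · exact hshort _ _ h4
    · exact hminus _ _ (hs _ _ h1 h2 hi) (hm _ hj) h4
  | D =>
    rintro ⟨s, h1, h2, a, ha, _, _, _, _, i, j, k, l, hi, hj, hk, hl, hj0, hl0,
      ⟨_, h4 | h4⟩ | ⟨_, h4 | h4⟩⟩
    · exact (hplus _ _ h4).2 hj0
    · exact hm _ hk (hplus _ _ h4).1
    · exact (hplus _ _ h4).2 hj0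
    · exact hminus _ _ (hs _ _ h1 h2 hi) (hm _ hk) h4

abbrev GG (n : ℕ) (ct : CType) (I : Finset (Fin n)) : V n → V n → Prop :=
  Relation.ReflTransGen (ConnStep n ct I)

theorem low_congr {n : ℕ} {I : Finset (Fin n)} {p q : Fin n} (h : cc I p = cc I q) :
    Low I p ↔ Low I q := by unfold Low; rw [h]

theorem stepPlus {n : ℕ} {ct : CType} {I : Finset (Fin n)} (hstd : StandardI n ct I)
    {x : V n} {p q : Fin n} (hpq : p ≠ q) (lp : Low I p) (lq : Low I q) (hp : x p ≠ 0)
    (hq : x q ≠ 0) (hx : RegI n ct I x) (hy : RegI n ct I (plusR p q x)) :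
    GG n ct I x (plusR p q x) := by
  wlog h : p < q generalizing p q
  · have e : plusR p q x = plusR q p x := by
      funext k; unfold plusR; split_ifs with h1 h2 <;> simp_all
    rw [e] at hy ⊢
    exact this hpq.symm lq lp hq hp hy (lt_of_le_of_ne (not_lt.1 h) hpq.symm)
  by_cases he : plusR p q x = x
  · rw [he]
  apply Relation.ReflTransGen.single
  rw [← sRefl_plus hpq] at hy he ⊢
  refine ⟨hx, hy, Or.inr ⟨ee p + ee q, ?_, Relation.ReflTransGen.refl⟩⟩
  unfold LinkedRoot
  rw [if_pos hstd]
  have bp : (ee p + ee q) p ≠ (0:ℝ) := by simp [ee_apply, hpq]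
  have bq : (ee p + ee q) q ≠ (0:ℝ) := by simp [ee_apply, hpq.symm]
  refine ⟨hx, ⟨plus_mem_Phi ct hpq, p, ?_, ?_⟩, ?_, hy, he, ?_⟩
  · simp [ee_apply, hpq]
  · intro j hj
    simp [ee_apply, hj.ne, (hj.trans h).ne]
  · intro hmem
    rcases lastReg hstd hmem with ⟨p', q', h1, h2, _⟩ | h3
    · have := congrFun h2 q'
      simp only [Pi.add_apply, Pi.sub_apply, ee_apply, h1.symm, if_true, if_false] at this
      split_ifs at this <;> norm_num at this
    · exact h3 p bp lp
  · apply not_exc hstd hpq bp bq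
    intro k hk
    by_cases h1 : k = p
    · subst h1; exact ⟨lp, hp⟩
    · by_cases h2 : k = q
      · subst h2; exact ⟨lq, hq⟩
      · simp [ee_apply, h1, h2] at hk

abbrev sw {n : ℕ} (p q : Fin n) (x : V n) : V n := fun k => x (Equiv.swap p q k)

theorem wi_swap {n : ℕ} (ct : CType) (I : Finset (Fin n)) (p : Fin n) :
    ∀ (d : ℕ) (hd : p.1 + d < n), (∀ k : Fin n, p ≤ k → k.1 < p.1 + d → k ∈ I) →
    ∀ x : V n, WIOrb n ct I x (sw p ⟨p.1 + d, hd⟩ x) := by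
  intro d
  induction d with
  | zero =>
    intro hd _ x
    have : sw p ⟨p.1 + 0, hd⟩ x = x := by funext k; simp [sw]
    rw [this]
    exact Relation.ReflTransGen.refl
  | succ d ih =>
    intro hd hI x
    have h1 := ih (by omega) (fun k hk hk' => hI k hk (by omega))
    set r : Fin n := ⟨p.1 + d, by omega⟩ with hr
    set r' : Fin n := ⟨p.1 + (d + 1), hd⟩ with hr'
    have hrr : r ≠ r' := by rw [hr, hr']; simp
    have hrI : r ∈ I := hI r (by rw [Fin.le_def]; simp [hr]) (by simp [hr])
    have hstep : ∀ y : V n, WIOrb n ct I y (sw r r' y) := by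
      intro y
      apply Relation.ReflTransGen.single
      refine ⟨r, hrI, ?_⟩
      rw [alpha_of_lt ct r (by simp [hr]; omega)]
      have : (⟨r.1 + 1, by simp [hr]; omega⟩ : Fin n) = r' := by
        apply Fin.ext; simp [hr, hr']; omega
      rw [this, sRefl_minus hrr]
    by_cases hd0 : d = 0
    · have : r = p := by apply Fin.ext; simp [hr, hd0]
      rw [this] at hstep
      exact hstep x
    have hpr : p ≠ r := by
      intro h; have := congrArg Fin.val h; simp [hr] at this; omega
    have hpr' : p ≠ r' := by
      intro h; have := congrArg Fin.val h; simp [hr'] at this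
    have := ((hstep x).trans (h1 _)).trans (hstep _)
    have e : sw p r' x = sw r r' (sw p r (sw r r' x)) := by
      funext k
      simp only [sw]
      congr 1
      simp only [Equiv.swap_apply_def]
      grind
    rw [e]
    exact this

theorem stepMinus {n : ℕ} {ct : CType} {I : Finset (Fin n)} (hstd : StandardI n ct I)
    {x : V n} {p q : Fin n} (hpq : p ≠ q) (lp : Low I p) (lq : Low I q)
    (h00 : cc I p = cc I q ∨ (x p ≠ 0 ∧ x q ≠ 0))
    (hx : RegI n ct I x) (hy : RegI n ct I (sw p q x)) :
    GG n ct I x (sw p q x) := by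
  wlog h : p < q generalizing p q
  · have e : sw p q x = sw q p x := by
      funext k; simp only [sw, Equiv.swap_comm]
    rw [e] at hy ⊢
    exact this hpq.symm lq lp (h00.imp Eq.symm And.symm) hy (lt_of_le_of_ne (not_lt.1 h) hpq.symm)
  by_cases hc : cc I p = cc I q
  · apply Relation.ReflTransGen.single
    refine ⟨hx, hy, Or.inl ?_⟩
    have hI := cc_eq_mem h.le hc
    have h' : p.1 < q.1 := h
    have := wi_swap ct I p (q.1 - p.1) (by have := q.2; omega)
      (fun k h1 h2 => hI k h1 (by rw [Fin.lt_def]; omega)) x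
    have e : (⟨p.1 + (q.1 - p.1), by have := q.2; omega⟩ : Fin n) = q := by
      apply Fin.ext; simp; omega
    rw [e] at this
    exact this
  obtain ⟨hp, hq⟩ := h00.resolve_left hc
  by_cases he : sw p q x = x
  · rw [he]
  apply Relation.ReflTransGen.single
  have e := sRefl_minus hpq x
  change _ = sw p q x at e
  rw [← e] at hy he ⊢
  refine ⟨hx, hy, Or.inr ⟨ee p - ee q, ?_, Relation.ReflTransGen.refl⟩⟩
  unfold LinkedRoot
  rw [if_pos hstd]
  have bp : (ee p - ee q) p ≠ (0:ℝ) := by simp [ee_apply, hpq]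
  have bq : (ee p - ee q) q ≠ (0:ℝ) := by simp [ee_apply, hpq.symm]
  refine ⟨hx, ⟨minus_mem_Phi ct hpq, p, ?_, ?_⟩, ?_, hy, he, ?_⟩
  · simp [ee_apply, hpq]
  · intro j hj
    simp [ee_apply, hj.ne, (hj.trans h).ne]
  · intro hmem
    rcases lastReg hstd hmem with ⟨p', q', h1, h2, h3⟩ | h3
    · have e1 := congrFun h2 p'
      have e2 := congrFun h2 q'
      simp only [Pi.sub_apply, ee_apply, h1, h1.symm, if_true, if_false] at e1 e2
      have hp' : p' = p := by
        by_contra hne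
        simp only [hne, if_false] at e1
        split_ifs at e1 <;> norm_num at e1
      have hq' : q' = q := by
        by_contra hne
        simp only [hne, if_false] at e2
        split_ifs at e2 <;> norm_num at e2
      rw [hp', hq'] at h3
      exact hc h3
    · exact h3 p bp lp
  · apply not_exc hstd hpq bp bq
    intro k hk
    by_cases h1 : k = p
    · subst h1; exact ⟨lp, hp⟩
    · by_cases h2 : k = q
      · subst h2; exact ⟨lq, hq⟩
      · simp [ee_apply, h1, h2] at hk

def fl {n : ℕ} (i j : Fin n) (x : V n) : V n := fun k => if k = i ∨ k = j then - x k else x k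

def UU {n : ℕ} (I : Finset (Fin n)) (x : V n) (i : Fin n) : Prop :=
  ∀ k, cc I k = cc I i → |x k| = |x i| → k = i

theorem abs_fl {n : ℕ} (i j k : Fin n) (x : V n) : |fl i j x k| = |x k| := by
  unfold fl; split_ifs <;> simp

theorem UU_fl {n : ℕ} {I : Finset (Fin n)} {x : V n} {i j k : Fin n} (h : UU I x k) :
    UU I (fl i j x) k := by
  intro k' h1 h2
  rw [abs_fl, abs_fl] at h2
  exact h k' h1 h2

theorem fl_ne_zero {n : ℕ} {i j k : Fin n} {x : V n} (h : x k ≠ 0) : fl i j x k ≠ 0 := by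
  unfold fl; split_ifs <;> simpa using h

theorem reg_sw {n : ℕ} {ct : CType} {I : Finset (Fin n)} (hstd : StandardI n ct I)
    {x : V n} {i j : Fin n} (hx : RegI n ct I x) (hc : cc I i = cc I j) (li : Low I i) :
    RegI n ct I (sw i j x) := by
  have lj : Low I j := (low_congr hc).1 li
  have hcc : ∀ k, cc I (Equiv.swap i j k) = cc I k := by
    intro k
    rw [Equiv.swap_apply_def]
    split_ifs with h1 h2
    · rw [h1, hc]
    · rw [h2, hc]
    · rfl
  apply reg_of hstd hx
  · intro k hk
    have h1 : k ≠ i := by rintro rfl; exact hk li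
    have h2 : k ≠ j := by rintro rfl; exact hk lj
    simp only [sw, Equiv.swap_apply_of_ne_of_ne h1 h2]
  · intro p q hpq hcpq _
    apply reg_ne hx
    · exact fun h => hpq ((Equiv.swap i j).injective h)
    · rw [hcc, hcc, hcpq]

theorem reg_fl {n : ℕ} {ct : CType} {I : Finset (Fin n)} (hstd : StandardI n ct I)
    {x : V n} {i j : Fin n} (hx : RegI n ct I x) (li : Low I i) (lj : Low I j)
    (ui : UU I x i) (uj : UU I x j) :
    RegI n ct I (fl i j x) := by
  apply reg_of hstd hx
  · intro k hk
    have h1 : k ≠ i := by rintro rfl; exact hk li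
    have h2 : k ≠ j := by rintro rfl; exact hk lj
    simp [fl, h1, h2]
  · intro p q hpq hc _ he
    have hne := reg_ne hx hpq hc
    have habs : |x p| = |x q| := by rw [← abs_fl i j p x, ← abs_fl i j q x, he]
    by_cases hp : p = i ∨ p = j
    · rcases hp with rfl | rfl
      · exact hpq (ui q hc.symm habs.symm).symm
      · exact hpq (uj q hc.symm habs.symm).symm
    · by_cases hq : q = i ∨ q = j
      · rcases hq with rfl | rfl
        · exact hpq (ui p hc habs)
        · exact hpq (uj p hc habs)
      · simp only [fl, hp, hq, if_false] at he
        exact hne he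

theorem core_same {n : ℕ} {ct : CType} {I : Finset (Fin n)} (hstd : StandardI n ct I)
    {x : V n} {i j : Fin n} (hij : i ≠ j) (hx : RegI n ct I x) (li : Low I i) (lj : Low I j)
    (ui : UU I x i) (uj : UU I x j) (hi : x i ≠ 0) (hj : x j ≠ 0) (hc : cc I i = cc I j) :
    GG n ct I x (fl i j x) := by
  have hf := reg_fl hstd hx li lj ui uj
  have e : plusR i j x = sw i j (fl i j x) := by
    funext k; simp only [plusR, sw, fl, Equiv.swap_apply_def]; grind
  have e2 : sw i j (plusR i j x) = fl i j x := by
    rw [e]; funext k; simp [sw]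
  have hr : RegI n ct I (plusR i j x) := by rw [e]; exact reg_sw hstd hf hc li
  refine (stepPlus hstd hij li lj hi hj hx hr).trans ?_
  have := stepMinus hstd hij li lj (Or.inl hc) hr (by rw [e2]; exact hf)
  rw [e2] at this
  exact this

theorem core_abs {n : ℕ} {ct : CType} {I : Finset (Fin n)} (hstd : StandardI n ct I)
    {x : V n} {i j : Fin n} (hij : i ≠ j) (hx : RegI n ct I x) (li : Low I i) (lj : Low I j)
    (ui : UU I x i) (uj : UU I x j) (hi : x i ≠ 0) (hj : x j ≠ 0) (ha : |x i| = |x j|) :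
    GG n ct I x (fl i j x) := by
  have hf := reg_fl hstd hx li lj ui uj
  rcases abs_eq_abs.1 ha with h | h
  · have e : plusR i j x = fl i j x := by
      funext k; simp only [plusR, fl]; grind
    have := stepPlus hstd hij li lj hi hj hx (by rw [e]; exact hf)
    rwa [e] at this
  · have e : sw i j x = fl i j x := by
      funext k; simp only [sw, fl, Equiv.swap_apply_def]; grind
    have := stepMinus hstd hij li lj (Or.inr ⟨hi, hj⟩) hx (by rw [e]; exact hf)
    rwa [e] at this

theorem core_via {n : ℕ} {ct : CType} {I : Finset (Fin n)} (hstd : StandardI n ct I)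
    {x : V n} {i j k : Fin n} (hik : i ≠ k) (hkj : k ≠ j) (hij : i ≠ j)
    (hx : RegI n ct I x) (li : Low I i) (lj : Low I j)
    (ui : UU I x i) (uj : UU I x j) (hi : x i ≠ 0) (hj : x j ≠ 0) (hc : cc I k = cc I j)
    (hk : |x k| = |x i|) (uk : UU I x k) :
    GG n ct I x (fl i j x) := by
  have lk : Low I k := (low_congr hc).2 lj
  have hk0 : x k ≠ 0 := by rw [← abs_pos, hk, abs_pos]; exact hi
  refine (core_abs hstd hik hx li lk ui uk hi hk0 hk.symm).trans ?_
  have := core_same hstd hkj (reg_fl hstd hx li lk ui uk) lk lj (UU_fl uk) (UU_fl uj)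
    (fl_ne_zero hk0) (fl_ne_zero hj) hc
  convert this using 1
  funext r
  simp only [fl]; grind

theorem fl_comm {n : ℕ} (i j : Fin n) (x : V n) : fl i j x = fl j i x := by
  funext k; simp only [fl, or_comm]

theorem core_zero {n : ℕ} {ct : CType} {I : Finset (Fin n)} (hstd : StandardI n ct I)
    {x : V n} {i j : Fin n} (hij : i ≠ j) (hx : RegI n ct I x) (li : Low I i) (lj : Low I j)
    (ui : UU I x i) (uj : UU I x j) (hi : x i ≠ 0) (hj : x j ≠ 0) (hc : cc I i ≠ cc I j)
    (h1 : ∀ p, cc I p = cc I i → |x p| ≠ |x j|) (h2 : ∀ p, cc I p = cc I j → |x p| ≠ |x i|) :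
    GG n ct I x (fl i j x) := by
  have hf := reg_fl hstd hx li lj ui uj
  have h1' : ∀ p, cc I p = cc I i → x p ≠ x j := fun p hp h => h1 p hp (by rw [h])
  have h2' : ∀ p, cc I p = cc I j → x p ≠ x i := fun p hp h => h2 p hp (by rw [h])
  have hr : RegI n ct I (sw i j x) := by
    apply reg_of hstd hx
    · intro k hk
      have h1 : k ≠ i := by rintro rfl; exact hk li
      have h2 : k ≠ j := by rintro rfl; exact hk lj
      simp only [sw, Equiv.swap_apply_of_ne_of_ne h1 h2]
    · intro p q hpq hcpq _
      have := reg_ne hx hpq hcpq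
      simp only [sw, Equiv.swap_apply_def]
      grind
  have e : plusR i j (sw i j x) = fl i j x := by
    funext k; simp only [plusR, fl, sw, Equiv.swap_apply_def]; grind
  refine (stepMinus hstd hij li lj (Or.inr ⟨hi, hj⟩) hx hr).trans ?_
  have := stepPlus hstd hij li lj (x := sw i j x) (by simpa [sw] using hj)
    (by simpa [sw] using hi) hr (by rw [e]; exact hf)
  rwa [e] at this

theorem core_two {n : ℕ} {ct : CType} {I : Finset (Fin n)} (hstd : StandardI n ct I)
    {x : V n} {i j l k : Fin n} (hij : i ≠ j) (hx : RegI n ct I x) (li : Low I i) (lj : Low I j)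
    (ui : UU I x i) (uj : UU I x j) (hi : x i ≠ 0) (hj : x j ≠ 0) (hc : cc I i ≠ cc I j)
    (hab : |x i| ≠ |x j|)
    (hl : cc I l = cc I i) (hl' : x l = - x j) (hk : cc I k = cc I j) (hk' : x k = - x i) :
    GG n ct I x (fl i j x) := by
  have hf := reg_fl hstd hx li lj ui uj
  have ll : Low I l := (low_congr hl).2 li
  have lk : Low I k := (low_congr hk).2 lj
  have hli : l ≠ i := by rintro rfl; exact hab (by rw [hl', abs_neg])
  have hkj : k ≠ j := by rintro rfl; exact hab (by rw [hk', abs_neg])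
  have hlk : l ≠ k := by rintro rfl; exact hc (hl.symm.trans hk)
  have hlj : l ≠ j := by rintro rfl; exact hc hl.symm
  have hki : k ≠ i := by rintro rfl; exact hc hk
  have hi2 : ∀ p, cc I p = cc I i → x p ≠ - x i := by
    intro p hp h
    have := ui p hp (by rw [h, abs_neg])
    rw [this] at h
    exact hi (by linarith)
  have hj2 : ∀ p, cc I p = cc I j → x p ≠ - x j := by
    intro p hp h
    have := uj p hp (by rw [h, abs_neg])
    rw [this] at h
    exact hj (by linarith)
  have hr : RegI n ct I (sw l k x) := by
    apply reg_of hstd hx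
    · intro r hr
      have h1 : r ≠ l := by rintro rfl; exact hr ll
      have h2 : r ≠ k := by rintro rfl; exact hr lk
      simp only [sw, Equiv.swap_apply_of_ne_of_ne h1 h2]
    · intro p q hpq hcpq _
      have := reg_ne hx hpq hcpq
      simp only [sw, Equiv.swap_apply_def]
      grind
  have hl0 : x l ≠ 0 := by rw [hl']; simpa using hj
  have hk0 : x k ≠ 0 := by rw [hk']; simpa using hi
  refine (stepMinus hstd hlk ll lk (Or.inr ⟨hl0, hk0⟩) hx hr).trans ?_
  have hy1 : RegI n ct I (sw j k (fl i j x)) := reg_sw hstd hf hk.symm lj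
  have hy2 : RegI n ct I (sw i l (sw j k (fl i j x))) := reg_sw hstd hy1 hl.symm li
  have e : plusR i j (sw l k x) = sw i l (sw j k (fl i j x)) := by
    funext r; simp only [plusR, fl, sw, Equiv.swap_apply_def]; grind
  have s1 := stepPlus hstd hij li lj (x := sw l k x)
    (by simp only [sw, Equiv.swap_apply_of_ne_of_ne hli.symm hki.symm]; exact hi)
    (by simp only [sw, Equiv.swap_apply_of_ne_of_ne hlj.symm hkj.symm]; exact hj) hr
    (by rw [e]; exact hy2)
  rw [e] at s1
  refine s1.trans ?_
  have e1 : sw i l (sw i l (sw j k (fl i j x))) = sw j k (fl i j x) := by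
    funext r; simp [sw]
  have s2 := stepMinus hstd hli.symm li ll (Or.inl hl.symm) hy2 (by rw [e1]; exact hy1)
  rw [e1] at s2
  refine s2.trans ?_
  have e2 : sw j k (sw j k (fl i j x)) = fl i j x := by
    funext r; simp [sw]
  have s3 := stepMinus hstd hkj.symm lj lk (Or.inl hk.symm) hy1 (by rw [e2]; exact hf)
  rwa [e2] at s3

/-- Counting version. -/
noncomputable def NN {n : ℕ} (I : Finset (Fin n)) (x : V n) (i : Fin n) (a : ℝ) : Finset (Fin n) :=
  Finset.univ.filter (fun k : Fin n => cc I k = cc I i ∧ |x k| = a)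

theorem mem_NN {n : ℕ} {I : Finset (Fin n)} {x : V n} {i k : Fin n} {a : ℝ} :
    k ∈ NN I x i a ↔ cc I k = cc I i ∧ |x k| = a := by simp [NN]

theorem UU_of {n : ℕ} {I : Finset (Fin n)} {x : V n} {i k : Fin n} {a : ℝ}
    (h : (NN I x i a).card = 1) (hk : k ∈ NN I x i a) : UU I x k := by
  intro r h1 h2
  obtain ⟨z, hz⟩ := Finset.card_eq_one.1 h
  rw [mem_NN] at hk
  have h3 : r ∈ NN I x i a := mem_NN.2 ⟨h1.trans hk.1, h2.trans hk.2⟩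
  have h4 : k ∈ NN I x i a := mem_NN.2 hk
  rw [hz, Finset.mem_singleton] at h3 h4
  rw [h3, h4]

theorem exists_neg {n : ℕ} {ct : CType} {I : Finset (Fin n)} {x : V n} {i j : Fin n}
    (hx : RegI n ct I x) (h : 1 < (NN I x i |x j|).card) :
    ∃ l, cc I l = cc I i ∧ x l = - x j := by
  obtain ⟨p, hp, q, hq, hpq⟩ := Finset.one_lt_card.1 h
  rw [mem_NN] at hp hq
  have hne := reg_ne hx hpq (hp.1.trans hq.1.symm)
  rcases abs_eq_abs.1 hp.2 with h1 | h1
  · rcases abs_eq_abs.1 hq.2 with h2 | h2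
    · exact absurd (h1.trans h2.symm) hne
    · exact ⟨q, hq.1, h2⟩
  · exact ⟨p, hp.1, h1⟩

theorem core_all {n : ℕ} {ct : CType} {I : Finset (Fin n)} (hstd : StandardI n ct I)
    {x : V n} {i j : Fin n} (hij : i ≠ j) (hx : RegI n ct I x) (li : Low I i) (lj : Low I j)
    (hi : x i ≠ 0) (hj : x j ≠ 0)
    (hi1 : (NN I x i |x i|).card = 1) (hj1 : (NN I x j |x j|).card = 1)
    (h2 : (NN I x i |x j|).card ≤ 1 ∨ 1 ≤ (NN I x j |x i|).card)
    (h3 : 1 ≤ (NN I x i |x j|).card ∨ (NN I x j |x i|).card ≤ 1) :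
    GG n ct I x (fl i j x) := by
  have ui : UU I x i := UU_of hi1 (mem_NN.2 ⟨rfl, rfl⟩)
  have uj : UU I x j := UU_of hj1 (mem_NN.2 ⟨rfl, rfl⟩)
  by_cases hc : cc I i = cc I j
  · exact core_same hstd hij hx li lj ui uj hi hj hc
  by_cases hab : |x i| = |x j|
  · exact core_abs hstd hij hx li lj ui uj hi hj hab
  by_cases c1 : (NN I x j |x i|).card = 1
  · obtain ⟨k, hk⟩ := Finset.card_pos.1 (by omega : 0 < (NN I x j |x i|).card)
    have uk := UU_of c1 hk
    rw [mem_NN] at hk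
    refine core_via hstd (k := k) ?_ ?_ hij hx li lj ui uj hi hj hk.1 hk.2 uk
    · rintro rfl; exact hc hk.1
    · rintro rfl; exact hab hk.2.symm
  by_cases c2 : (NN I x i |x j|).card = 1
  · obtain ⟨k, hk⟩ := Finset.card_pos.1 (by omega : 0 < (NN I x i |x j|).card)
    have uk := UU_of c2 hk
    rw [mem_NN] at hk
    rw [fl_comm]
    refine core_via hstd (k := k) ?_ ?_ hij.symm hx lj li uj ui hj hi hk.1 hk.2 uk
    · rintro rfl; exact hc hk.1.symm
    · rintro rfl; exact hab hk.2
  by_cases c0 : (NN I x i |x j|).card = 0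
  · have c0' : (NN I x j |x i|).card = 0 := by omega
    rw [Finset.card_eq_zero] at c0 c0'
    apply core_zero hstd hij hx li lj ui uj hi hj hc
    · intro p hp h
      have : p ∈ NN I x i |x j| := mem_NN.2 ⟨hp, h⟩
      rw [c0] at this; simp at this
    · intro p hp h
      have : p ∈ NN I x j |x i| := mem_NN.2 ⟨hp, h⟩
      rw [c0'] at this; simp at this
  · obtain ⟨l, hl, hl'⟩ := exists_neg hx (by omega : 1 < (NN I x i |x j|).card)
    obtain ⟨k, hk, hk'⟩ := exists_neg hx (by omega : 1 < (NN I x j |x i|).card)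
    exact core_two hstd hij hx li lj ui uj hi hj hc hab hl hl' hk hk'

theorem nsl_eq {n : ℕ} {ct : CType} {I : Finset (Fin n)} (hstd : StandardI n ct I)
    {s : ℕ} (hs1 : 1 ≤ s) (hsm : s < mval n I) {i : Fin n} (hi : InSeg n ct I s i) (x : V n)
    (a : ℝ) : nsl n ct I x s a = (NN I x i a).card := by
  have h := (inseg_iff hstd hs1 hsm.le i).1 hi
  unfold nsl NN
  congr 1
  ext k
  simp only [Finset.mem_filter, Finset.mem_univ, true_and, inseg_iff hstd hs1 hsm.le k]
  rw [← h, Nat.add_right_cancel_iff]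

theorem low_of {n : ℕ} {ct : CType} {I : Finset (Fin n)} (hstd : StandardI n ct I)
    {s : ℕ} (hs1 : 1 ≤ s) (hsm : s < mval n I) {i : Fin n} (hi : InSeg n ct I s i) :
    Low I i := by
  have h := (inseg_iff hstd hs1 hsm.le i).1 hi
  unfold mval at hsm
  rw [qlist_len] at hsm
  unfold Low; omega

/-- Lemma 4.10 / `cclem3`. -/
theorem statement1 (n : ℕ) (ct : CType) (I J : Finset (Fin n)) (lam lbar : V n)
    (hstd : StandardI n ct I)
    (hint : IntegralW n ct lam) (hreg : RegI n ct I lam)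
    (horb : WOrb n ct lam lbar) (hdom : DominantW n ct lbar)
    (hJ : ∀ i : Fin n, i ∈ J ↔ inn lbar (alphaR n ct i) = 0)
    (i j : Fin n) (a b : ℝ) (ha : a = |lam i|) (hb : b = |lam j|)
    (hab : a * b ≠ 0)
    (hiq : i.1 + 1 ≤ qv n ct I (mval n I - 1))
    (hjq : j.1 + 1 ≤ qv n ct I (mval n I - 1))
    (s t : ℕ) (hs1 : 1 ≤ s) (hsm : s < mval n I) (ht1 : 1 ≤ t) (htm : t < mval n I)
    (hsegi : InSeg n ct I s i) (hsegj : InSeg n ct I t j)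
    (h1 : nsl n ct I lam s a = 1 ∧ nsl n ct I lam t b = 1)
    (h2 : nsl n ct I lam s b ≤ 1 ∨ 1 ≤ nsl n ct I lam t a)
    (h3 : 1 ≤ nsl n ct I lam s b ∨ nsl n ct I lam t a ≤ 1) :
    Conn n ct I lam (sRefl (ee i) (sRefl (ee j) lam)) := by
  have li := low_of hstd hs1 hsm hsegi
  have lj := low_of hstd ht1 htm hsegj
  by_cases hij : i = j
  · subst hij
    have e : sRefl (ee i) (sRefl (ee i) lam) = lam := by
      rw [sRefl_ee, sRefl_ee]; funext k; simp only; split_ifs <;> simp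
    rw [e]
    exact ⟨hreg, hreg, Relation.ReflTransGen.refl⟩
  have e : sRefl (ee i) (sRefl (ee j) lam) = fl i j lam := by
    rw [sRefl_ee, sRefl_ee]; funext k; simp only [fl]; grind
  rw [e]
  subst ha hb
  simp only [nsl_eq hstd hs1 hsm hsegi, nsl_eq hstd ht1 htm hsegj] at h1 h2 h3
  have hi : lam i ≠ 0 := by intro h; simp [h] at hab
  have hj : lam j ≠ 0 := by intro h; simp [h] at hab
  exact ⟨hreg, reg_fl hstd hreg li lj (UU_of h1.1 (mem_NN.2 ⟨rfl, rfl⟩))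
    (UU_of h1.2 (mem_NN.2 ⟨rfl, rfl⟩)),
    core_all hstd hij hreg li lj hi hj h1.1 h1.2 h2 h3⟩

end JantzenBlocks
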